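/- There is a one-relator inverse monoid Inv⟨A | w = 1⟩ with undecidable word problem: there exist n : ℕ and a word w ∈ FreeMonoid ((Fin n) × Bool) such that, letting σ be the congruence on FreeMonoid ((Fin n) × Bool) generated by the Vagner congruence ν together with the single pair (w, 1), the predicate on pairs of words (u, v) given by 'σ relates u and v' is not ComputablePred. -/

import Mathlib

/-- The formal inverse of a word over `B`: reverse the word and negate the `Bool` component
of each letter. -/
def wInv {B : Type*} (w : FreeMonoid (B × Bool)) : FreeMonoid (B × Bool) :=
  FreeMonoid.ofList (((FreeMonoid.toList w).map fun p => (p.1, !p.2)).reverse)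

/-- The generating relation of the Vagner congruence: `w w⁻¹ w ~ w` and
`w w⁻¹ u u⁻¹ ~ u u⁻¹ w w⁻¹` for all words `u, w`. -/
def vagnerRel (B : Type*) : FreeMonoid (B × Bool) → FreeMonoid (B × Bool) → Prop :=
  fun x y =>
    (∃ w, x = w * wInv w * w ∧ y = w) ∨
    (∃ u w, x = w * wInv w * (u * wInv u) ∧ y = u * wInv u * (w * wInv w))

/-- The congruence defining the one-relator inverse monoid `Inv⟨Fin n | w = 1⟩`: generated by
the Vagner congruence together with the single pair `(w, 1)`. -/
def oneRelatorInvCon {n : ℕ} (w : FreeMonoid (Fin n × Bool)) : Con (FreeMonoid (Fin n × Bool)) :=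
  conGen (fun x y => vagnerRel (Fin n) x y ∨ (x = w ∧ y = 1))

instance {α : Type*} [Primcodable α] : Primcodable (FreeMonoid α) :=
  Primcodable.ofEquiv (List α) FreeMonoid.toList


/-! ### Register programs -/

/-- Structured nondeterministic register programs. -/
inductive RProg : Type
  | inc : ℕ → RProg
  | dec : ℕ → RProg
  | tz : ℕ → RProg
  | seq : RProg → RProg → RProg
  | star : RProg → RProg

namespace RProg

open Function

/-- Relational semantics. -/
def sem : RProg → (ℕ → ℕ) → (ℕ → ℕ) → Prop
  | inc i, s, s' => s' = update s i (s i + 1)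
  | dec i, s, s' => 0 < s i ∧ s' = update s i (s i - 1)
  | tz i, s, s' => s i = 0 ∧ s' = s
  | seq P Q, s, s' => ∃ m, sem P s m ∧ sem Q m s'
  | star P, s, s' => Relation.ReflTransGen (sem P) s s'

theorem sem_star_seq {body : RProg} {st : ℕ → ℕ → ℕ} {p : ℕ → Prop}
    (hb : ∀ j s', sem body (st j) s' ↔ p j ∧ s' = st (j + 1)) (Q : RProg) (s' : ℕ → ℕ) :
    sem (seq (star body) Q) (st 0) s' ↔ ∃ j, (∀ i < j, p i) ∧ sem Q (st j) s' := by
  have key : ∀ m, Relation.ReflTransGen (sem body) (st 0) m ↔ ∃ j, (∀ i < j, p i) ∧ m = st j := by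
    intro m
    constructor
    · intro h
      induction h with
      | refl => exact ⟨0, by simp, rfl⟩
      | tail _ h2 ih =>
        obtain ⟨j, hj, rfl⟩ := ih
        obtain ⟨h3, rfl⟩ := (hb _ _).1 h2
        refine ⟨j + 1, fun i hi => ?_, rfl⟩
        rcases Nat.lt_succ_iff_lt_or_eq.1 hi with h | rfl
        · exact hj _ h
        · exact h3
    · rintro ⟨j, hj, rfl⟩
      induction j with
      | zero => exact .refl
      | succ j ih =>
        exact (ih fun i hi => hj i (by omega)).tail ((hb _ _).2 ⟨hj j (by omega), rfl⟩)
  constructor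
  · rintro ⟨m, h1, h2⟩
    obtain ⟨j, hj, rfl⟩ := (key m).1 h1
    exact ⟨j, hj, h2⟩
  · rintro ⟨j, hj, h⟩
    exact ⟨_, (key _).2 ⟨j, hj, rfl⟩, h⟩

/-- Counter loops. -/
theorem sem_loop {body : RProg} {st : ℕ → ℕ → ℕ} {c k : ℕ} (hc : ∀ j, st j c = k - j)
    (hb : ∀ j s', sem body (st j) s' ↔ j < k ∧ s' = st (j + 1)) (s s' : ℕ → ℕ) (hs : s = st 0) :
    sem (seq (star body) (tz c)) s s' ↔ s' = st k := by
  subst hs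
  rw [sem_star_seq hb]
  constructor
  · rintro ⟨j, hj, h1, rfl⟩
    rw [hc] at h1
    have : j = k := by
      rcases Nat.lt_or_ge k j with h | h
      · exact absurd (hj _ h) (lt_irrefl _)
      · omega
    rw [this]
  · rintro rfl
    exact ⟨k, fun i hi => hi, by simp [hc], rfl⟩

/-- Clear a register. -/
def clear (r : ℕ) : RProg := seq (star (dec r)) (tz r)

theorem sem_clear (r : ℕ) (s s' : ℕ → ℕ) : sem (clear r) s s' ↔ s' = update s r 0 := by
  unfold clear
  rw [sem_loop (k := s r) (st := fun j => update s r (s r - j))]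
  · simp
  · simp
  · intro j s'
    simp only [sem]
    simp [Nat.sub_sub]
  · simp

/-- Move register `r` to the empty register `o`. -/
def move (r o : ℕ) : RProg := seq (star (seq (dec r) (inc o))) (tz r)

theorem sem_move {r o : ℕ} (h : r ≠ o) (s s' : ℕ → ℕ) (ho : s o = 0) :
    sem (move r o) s s' ↔ s' = update (update s o (s r)) r 0 := by
  unfold move
  rw [sem_loop (k := s r) (st := fun j => update (update s o j) r (s r - j))]
  · simp
  · simp
  · intro j s'
    simp only [sem]
    constructor
    · rintro ⟨m, ⟨h1, rfl⟩, rfl⟩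
      simp at h1
      refine ⟨by omega, ?_⟩
      funext x
      simp only [update_apply]
      grind
    · rintro ⟨h1, rfl⟩
      refine ⟨_, ⟨by simp; omega, rfl⟩, ?_⟩
      funext x
      simp only [update_apply]
      grind
  · funext x
    simp only [update_apply]
    grind

/-- Copy register `r` to the empty register `o`, with the scratch register `t`. -/
def copy (r o t : ℕ) : RProg :=
  seq (seq (star (seq (dec r) (seq (inc o) (inc t)))) (tz r)) (move t r)

theorem sem_copy {r o t : ℕ} (h1 : r ≠ o) (h2 : r ≠ t) (h3 : o ≠ t) (s s' : ℕ → ℕ)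
    (ho : s o = 0) (ht : s t = 0) :
    sem (copy r o t) s s' ↔ s' = update s o (s r) := by
  have A : ∀ m, sem (seq (star (seq (dec r) (seq (inc o) (inc t)))) (tz r)) s m ↔
      m = update (update (update s o (s r)) t (s r)) r 0 := by
    intro m
    rw [sem_loop (k := s r) (st := fun j => update (update (update s o j) t j) r (s r - j))]
    · simp
    · simp
    · intro j s'
      simp only [sem]
      constructor
      · rintro ⟨m, ⟨h1, rfl⟩, m', rfl, rfl⟩
        simp at h1
        refine ⟨by omega, ?_⟩
        funext x
        simp only [update_apply]
        grind
      · rintro ⟨h1, rfl⟩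
        refine ⟨_, ⟨by simp; omega, rfl⟩, _, rfl, ?_⟩
        funext x
        simp only [update_apply]
        grind
    · funext x
      simp only [update_apply]
      grind
  unfold copy
  rw [sem]
  simp only [A, exists_eq_left]
  rw [sem_move h2.symm _ _ (by simp)]
  have : update (update (update (update (update s o (s r)) t (s r)) r 0) r
      (update (update (update s o (s r)) t (s r)) r 0 t)) t 0 = update s o (s r) := by
    funext x
    simp only [update_apply]
    grind
  rw [this]

/-- All registers from `b` on are empty. -/
def Clean (b : ℕ) (s : ℕ → ℕ) : Prop := ∀ r, b ≤ r → s r = 0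

/-- A partial function is computed by register programs. -/
def Cmp {n : ℕ} (f : List.Vector ℕ n →. ℕ) : Prop :=
  ∀ (inp : Fin n → ℕ) (b : ℕ), (∀ i, inp i < b) → ∃ P : RProg, ∀ s, Clean b s → ∀ s',
    sem P s s' ↔ ∃ y ∈ f (List.Vector.ofFn fun i => s (inp i)), s' = update s b y

theorem cmp_zero : Cmp (n := 0) (fun _ => Part.some 0) := by
  intro inp b hb
  refine ⟨tz b, fun s hs s' => ?_⟩
  have := hs b le_rfl
  have h2 : update s b 0 = s := by rw [← this]; simp
  simp [sem, this, h2]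

theorem cmp_get {n : ℕ} (i : Fin n) : Cmp (n := n) (fun v => Part.some (v.get i)) := by
  intro inp b hb
  refine ⟨copy (inp i) b (b + 1), fun s hs s' => ?_⟩
  rw [sem_copy (hb i).ne (by have := hb i; omega) (by omega) _ _ (hs _ le_rfl) (hs _ (by omega))]
  simp

theorem cmp_succ : Cmp (n := 1) (fun v => Part.some (v.head.succ)) := by
  intro inp b hb
  refine ⟨seq (copy (inp 0) b (b + 1)) (inc b), fun s hs s' => ?_⟩
  rw [sem]
  simp only [sem_copy (hb 0).ne (by have := hb 0; omega) (by omega : b ≠ b + 1) s _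
    (hs _ le_rfl) (hs _ (by omega)), exists_eq_left]
  simp [sem, List.Vector.ofFn]

/-- Clear `n` registers from `b` on. -/
def clearN (b : ℕ) : ℕ → RProg
  | 0 => clear b
  | n + 1 => seq (clearN b n) (clear (b + (n + 1)))

theorem sem_clearN (b n : ℕ) (s s' : ℕ → ℕ) :
    sem (clearN b n) s s' ↔ s' = fun r => if b ≤ r ∧ r ≤ b + n then 0 else s r := by
  induction n generalizing s' with
  | zero =>
    rw [clearN, sem_clear]
    have : update s b 0 = fun r => if b ≤ r ∧ r ≤ b + 0 then 0 else s r := by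
      funext x; simp only [update_apply]; grind
    rw [this]
  | succ n ih =>
    rw [clearN, sem]
    simp only [ih, exists_eq_left, sem_clear]
    have : update (fun r => if b ≤ r ∧ r ≤ b + n then 0 else s r) (b + (n + 1)) 0 =
       fun r => if b ≤ r ∧ r ≤ b + (n + 1) then 0 else s r := by
      funext x; simp only [update_apply]; grind
    rw [this]

theorem cmp_args {m : ℕ} {n : ℕ} (g : Fin n → List.Vector ℕ m →. ℕ) (hg : ∀ i, Cmp (g i))
    (inp : Fin m → ℕ) (b : ℕ) (hb : ∀ i, inp i < b) :
    ∃ P : RProg, ∀ s, Clean b s → ∀ s', sem P s s' ↔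
      (∀ r < b, s' r = s r) ∧
      (∀ i : Fin n, s' (b + i) ∈ g i (List.Vector.ofFn fun i => s (inp i))) ∧
      Clean (b + n) s' := by
  induction n generalizing b with
  | zero =>
    refine ⟨tz b, fun s hs s' => ?_⟩
    simp only [sem, hs b le_rfl, true_and]
    constructor
    · rintro rfl
      exact ⟨fun _ _ => rfl, fun i => i.elim0, hs⟩
    · rintro ⟨h1, -, h2⟩
      funext r
      rcases Nat.lt_or_ge r b with h | h
      · exact h1 r h
      · rw [h2 r h, hs r h]
  | succ n ih =>
    obtain ⟨P0, hP0⟩ := hg 0 inp b hb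
    obtain ⟨P1, hP1⟩ := ih (fun i => g i.succ) (fun i => hg _) (b + 1) (fun i => by
      have := hb i; omega)
    refine ⟨seq P0 P1, fun s hs s' => ?_⟩
    rw [sem]
    have hv : ∀ y, (fun i => update s b y (inp i)) = fun i => s (inp i) := by
      intro y; funext i; exact update_of_ne (hb i).ne _ _
    have hcl : ∀ y, Clean (b + 1) (update s b y) := by
      intro y r hr
      rw [update_of_ne (by omega)]
      exact hs _ (by omega)
    constructor
    · rintro ⟨m, h1, h2⟩
      obtain ⟨y, hy, rfl⟩ := (hP0 s hs _).1 h1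
      obtain ⟨h3, h4, h5⟩ := (hP1 _ (hcl y) _).1 h2
      rw [hv] at h4
      refine ⟨fun r hr => ?_, fun i => ?_, ?_⟩
      · rw [h3 r (by omega), update_of_ne (by omega)]
      · refine Fin.cases ?_ (fun i => ?_) i
        · have := h3 b (by omega)
          rw [update_self] at this
          simpa [this] using hy
        · have := h4 i
          have e : b + ((i.succ : Fin (n+1)) : ℕ) = b + 1 + i := by simp; omega
          rw [e]; exact this
      · intro r hr; exact h5 r (by omega)
    · rintro ⟨h1, h2, h3⟩
      refine ⟨update s b (s' b), (hP0 s hs _).2 ⟨_, h2 0, rfl⟩, (hP1 _ (hcl _) _).2 ⟨?_, ?_, ?_⟩⟩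
      · intro r hr
        rcases eq_or_ne r b with rfl | h
        · simp
        · rw [update_of_ne h]; exact h1 r (by omega)
      · intro i
        rw [hv]
        have := h2 i.succ
        have e : b + ((i.succ : Fin (n+1)) : ℕ) = b + 1 + i := by simp; omega
        rwa [e] at this
      · intro r hr; exact h3 r (by omega)

theorem mem_mOfFn {n : ℕ} (g : Fin n → Part ℕ) (w : List.Vector ℕ n) :
    w ∈ List.Vector.mOfFn g ↔ ∀ i, w.get i ∈ g i := by
  induction n with
  | zero =>
    rw [List.Vector.eq_nil w]
    simp [List.Vector.mOfFn, Part.pure_eq_some]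
  | succ n ih =>
    simp only [List.Vector.mOfFn, Part.bind_eq_bind, Part.mem_bind_iff, Part.pure_eq_some,
      Part.mem_some_iff, ih]
    constructor
    · rintro ⟨a, ha, v, hv, rfl⟩ i
      refine Fin.cases ?_ (fun i => ?_) i
      · simpa using ha
      · simpa using hv i
    · intro h
      refine ⟨w.head, by simpa using h 0, w.tail, fun i => ?_, by simp⟩
      simpa using h i.succ

theorem cmp_comp {m n : ℕ} {f : List.Vector ℕ n →. ℕ} (g : Fin n → List.Vector ℕ m →. ℕ)
    (hf : Cmp f) (hg : ∀ i, Cmp (g i)) :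
    Cmp fun v => (List.Vector.mOfFn fun i => g i v) >>= f := by
  intro inp b hb
  obtain ⟨P1, hP1⟩ := cmp_args g hg inp b hb
  obtain ⟨P2, hP2⟩ := hf (fun i => b + i) (b + n + 1) (fun i => by omega)
  refine ⟨seq P1 (seq P2 (seq (clearN b n) (move (b + n + 1) b))), fun s hs s' => ?_⟩
  simp only [sem, hP1 s hs, sem_clearN, exists_eq_left]
  have hmv : ∀ (m : ℕ → ℕ) y, (∀ r < b, m r = s r) → Clean (b + n) m →
      ∀ s', sem (move (b + n + 1) b)
        (fun r => if b ≤ r ∧ r ≤ b + n then 0 else update m (b + n + 1) y r) s' ↔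
      s' = update s b y := by
    intro m y h1 h2 s'
    rw [sem_move (by omega) _ _ (by simp)]
    refine Eq.congr rfl ?_
    funext x
    have h3 := h1 x
    have h4 := h2 x
    have h5 := hs x
    simp only [update_apply]
    grind
  constructor
  · rintro ⟨m, ⟨h1, h2, h3⟩, m', h4, h5⟩
    obtain ⟨y, hy, rfl⟩ := (hP2 m (fun r hr => h3 r (by omega)) _).1 h4
    refine ⟨y, ?_, (hmv m y h1 h3 s').1 h5⟩
    exact Part.mem_bind_iff.2 ⟨_, (mem_mOfFn _ _).2 fun i => by
      rw [List.Vector.get_ofFn]; exact h2 i, hy⟩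
  · rintro ⟨y, hy, rfl⟩
    obtain ⟨w, hw, hy⟩ := Part.mem_bind_iff.1 hy
    rw [mem_mOfFn] at hw
    let m : ℕ → ℕ := fun r => if h : b ≤ r ∧ r < b + n then w.get ⟨r - b, by omega⟩ else s r
    have hm : ∀ i : Fin n, m (b + i) = w.get i := by
      intro i
      have : b ≤ b + (i : ℕ) ∧ b + (i : ℕ) < b + n := by omega
      simp [m]
    have h1 : ∀ r < b, m r = s r := by
      intro r hr
      simp only [m]; rw [dif_neg (by omega)]
    have h3 : Clean (b + n) m := by
      intro r hr
      simp only [m]; rw [dif_neg (by omega)]; exact hs r (by omega)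
    refine ⟨m, ⟨h1, fun i => by rw [hm]; exact hw i, h3⟩, _,
      (hP2 m (fun r hr => h3 r (by omega)) _).2 ⟨y, ?_, rfl⟩, (hmv m y h1 h3 _).2 rfl⟩
    simpa [hm] using hy

theorem cmp_rfind {n : ℕ} {f : List.Vector ℕ (n + 1) → ℕ}
    (hf : Cmp (n := n + 1) (fun v => Part.some (f v))) :
    Cmp fun v => Nat.rfind fun n => Part.some (decide (f (n ::ᵥ v) = 0)) := by
  intro inp b hb
  obtain ⟨P, hP⟩ := hf (Fin.cons b inp) (b + 1) (fun i => by
    refine Fin.cases ?_ (fun i => ?_) i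
    · simp
    · have := hb i; simp; omega)
  refine ⟨seq (star (seq P (seq (dec (b + 1)) (seq (clear (b + 1)) (inc b))))) (seq P (tz (b + 1))),
    fun s hs s' => ?_⟩
  have hs0 : s = update s b 0 := by
    rw [← hs b le_rfl]; simp
  set v := List.Vector.ofFn fun i => s (inp i) with hv
  have hP' : ∀ j s', sem P (update s b j) s' ↔
      s' = update (update s b j) (b + 1) (f (j ::ᵥ v)) := by
    intro j s'
    rw [hP _ (fun r hr => by rw [update_of_ne (by omega)]; exact hs _ (by omega))]
    simp only [Part.mem_some_iff, exists_eq_left]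
    have : (List.Vector.ofFn fun i => update s b j (Fin.cons (α := fun _ => ℕ) b inp i)) =
        j ::ᵥ v := by
      simp only [List.Vector.ofFn, Fin.cons_zero, update_self, Fin.cons_succ]
      congr 2
      funext i
      exact update_of_ne (hb i).ne _ _
    rw [this]
  have hcl1 : ∀ j, update s b j (b + 1) = 0 := fun j => by
    rw [update_of_ne (by omega)]; exact hs _ (by omega)
  have hz : ∀ j, update (update s b j) (b + 1) 0 = update s b j := by
    intro j
    rw [← hcl1 j, update_eq_self]
  have hloop := sem_star_seq (st := fun j => update s b j) (p := fun j => f (j ::ᵥ v) ≠ 0)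
    (body := seq P (seq (dec (b + 1)) (seq (clear (b + 1)) (inc b)))) (by
      intro j s'
      simp only [sem, hP', exists_eq_left, sem_clear, update_self, update_idem]
      constructor
      · rintro ⟨m, ⟨h1, rfl⟩, rfl⟩
        refine ⟨by omega, ?_⟩
        rw [update_idem, hz]
        simp
      · rintro ⟨h1, rfl⟩
        refine ⟨_, ⟨by omega, rfl⟩, ?_⟩
        rw [update_idem, hz]
        simp) (seq P (tz (b + 1))) s'
  rw [hs0, hloop, ← hs0]
  constructor
  · rintro ⟨j, h1, h2⟩
    simp only [sem, hP', exists_eq_left, update_self] at h2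
    refine ⟨j, Nat.mem_rfind.2 ⟨by simp [h2.1], fun {i} hi => by simp [h1 i hi]⟩, ?_⟩
    rw [h2.2, h2.1, ← hcl1 j, update_eq_self]
  · rintro ⟨j, hj, rfl⟩
    obtain ⟨h1, h2⟩ := Nat.mem_rfind.1 hj
    refine ⟨j, fun i hi => by simpa using h2 hi, ?_⟩
    simp only [sem, hP', exists_eq_left, update_self]
    have h3 : f (j ::ᵥ v) = 0 := by simpa using h1
    exact ⟨h3, by rw [h3, ← hcl1 j, update_eq_self]⟩

theorem cmp_prec {n : ℕ} {f : List.Vector ℕ n → ℕ} {g : List.Vector ℕ (n + 2) → ℕ}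
    (hf : Cmp (n := n) (fun v => Part.some (f v)))
    (hg : Cmp (n := n + 2) (fun v => Part.some (g v))) :
    Cmp (n := n + 1) fun v => Part.some
      (v.head.rec (f v.tail) fun y IH => g (y ::ᵥ IH ::ᵥ v.tail)) := by
  intro inp b hb
  obtain ⟨Pf, hPf⟩ := hf (fun i => inp i.succ) (b + 2) (fun i => by
    have := hb i.succ; omega)
  obtain ⟨Pg, hPg⟩ := hg (Fin.cons b (Fin.cons (b + 2) fun i => inp i.succ)) (b + 3) (fun i => by
    refine Fin.cases ?_ (fun i => Fin.cases ?_ (fun i => ?_) i) i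
    · simp
    · simp
    · have := hb i.succ; simp; omega)
  refine ⟨seq (copy (inp 0) (b + 1) (b + 2)) (seq Pf (seq
    (seq (star (seq (dec (b + 1)) (seq Pg (seq (clear (b + 2))
      (seq (move (b + 3) (b + 2)) (inc b)))))) (tz (b + 1)))
    (seq (clear b) (move (b + 2) b)))), fun s hs s' => ?_⟩
  have hv : (List.Vector.ofFn fun i => s (inp i)) =
    s (inp 0) ::ᵥ (List.Vector.ofFn fun i : Fin n => s (inp i.succ)) := rfl
  rw [hv]
  set v := List.Vector.ofFn fun i : Fin n => s (inp i.succ) with hvv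
  simp only [List.Vector.head_cons, List.Vector.tail_cons, Part.mem_some_iff, exists_eq_left]
  set F : ℕ → ℕ := fun k => Nat.rec (f v) (fun y IH => g (y ::ᵥ IH ::ᵥ v)) k with hF
  set N := s (inp 0) with hN
  have hb0 := hb 0
  rw [sem]
  simp only [sem_copy (by omega : inp 0 ≠ b + 1) (by omega : inp 0 ≠ b + 2) (by omega) s _
    (hs _ (by omega)) (hs _ (by omega)), exists_eq_left]
  rw [sem]
  have hf' : ∀ s', sem Pf (update s (b + 1) N) s' ↔
      s' = update (update s (b + 1) N) (b + 2) (f v) := by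
    intro s'
    rw [hPf _ (fun r hr => by rw [update_of_ne (by omega)]; exact hs _ (by omega))]
    simp only [Part.mem_some_iff, exists_eq_left]
    have : (List.Vector.ofFn fun i : Fin n => update s (b + 1) N (inp i.succ)) = v := by
      rw [hvv]; congr 1; funext i
      exact update_of_ne (by have := hb i.succ; omega) _ _
    rw [this]
  simp only [← hN, hf', exists_eq_left]
  rw [sem]
  let st : ℕ → ℕ → ℕ := fun j => update (update (update s b j) (b + 1) (N - j)) (b + 2) (F j)
  have hPg' : ∀ j c s', sem Pg (update (update (update s b j) (b + 1) c) (b + 2) (F j)) s' ↔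
      s' = update (update (update (update s b j) (b + 1) c) (b + 2) (F j)) (b + 3) (F (j + 1)) := by
    intro j c s'
    rw [hPg _ (fun r hr => by
      rw [update_of_ne (by omega), update_of_ne (by omega), update_of_ne (by omega)]
      exact hs _ (by omega))]
    simp only [Part.mem_some_iff, exists_eq_left]
    have : (List.Vector.ofFn fun i => update (update (update s b j) (b + 1) c) (b + 2) (F j)
        (Fin.cons (α := fun _ => ℕ) b (Fin.cons (α := fun _ => ℕ) (b + 2) fun i => inp i.succ) i)) =
        j ::ᵥ F j ::ᵥ v := by
      simp only [List.Vector.ofFn, Fin.cons_zero, update_self, Fin.cons_succ]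
      congr 1
      · rw [update_of_ne (by omega), update_of_ne (by omega), update_self]
      congr 2
      funext i
      have := hb i.succ
      rw [update_of_ne (by omega), update_of_ne (by omega), update_of_ne (by omega)]
    rw [this]
  have hloop := fun s' => sem_loop (st := st) (c := b + 1) (k := N)
    (body := seq (dec (b + 1)) (seq Pg (seq (clear (b + 2)) (seq (move (b + 3) (b + 2)) (inc b)))))
    (by intro j; simp [st]) (by
      intro j s'
      have e1 : st j (b + 1) = N - j := by simp [st]
      have e2 : update (st j) (b + 1) (N - j - 1) =
          update (update (update s b j) (b + 1) (N - j - 1)) (b + 2) (F j) := by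
        funext x; simp only [st, update_apply]; grind
      have e3 : ∀ s', sem (seq Pg (seq (clear (b + 2)) (seq (move (b + 3) (b + 2)) (inc b))))
          (update (st j) (b + 1) (N - j - 1)) s' ↔ s' = st (j + 1) := by
        intro s'
        rw [sem, e2]
        simp only [hPg', exists_eq_left]
        rw [sem]
        simp only [sem_clear, exists_eq_left]
        rw [sem]
        simp only [sem_move (by omega : b + 3 ≠ b + 2) (update _ (b + 2) 0) _ (update_self ..),
          exists_eq_left]
        rw [sem]
        refine Eq.congr rfl ?_
        funext x
        have := hs x
        simp only [st, update_apply]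
        grind
      rw [sem]
      simp only [sem.eq_2, e1]
      constructor
      · rintro ⟨m, ⟨h1, rfl⟩, h2⟩
        exact ⟨by omega, (e3 _).1 h2⟩
      · rintro ⟨h1, rfl⟩
        exact ⟨_, ⟨by omega, rfl⟩, (e3 _).2 rfl⟩)
    (update (update s (b + 1) N) (b + 2) (f v)) s' (by
      funext x
      have := hs x
      have hF0 : F 0 = f v := rfl
      simp only [st, update_apply, hF0]
      clear_value F v N
      grind)
  simp only [hloop, exists_eq_left]
  rw [sem]
  simp only [sem_clear, exists_eq_left]
  rw [sem_move (by omega) _ _ (update_self ..)]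
  refine Eq.congr rfl ?_
  funext x
  have := hs x
  simp only [st, update_apply]
  grind

theorem cmp_of_primrec' {n : ℕ} {f : List.Vector ℕ n → ℕ} (hf : Nat.Primrec' f) :
    Cmp (n := n) (fun v => Part.some (f v)) := by
  induction hf with
  | zero => exact cmp_zero
  | succ => exact cmp_succ
  | get i => exact cmp_get i
  | @comp m n f g _ _ ihf ihg =>
    have := cmp_comp _ ihf ihg
    refine cast (congrArg Cmp ?_) this
    funext v
    have h : (List.Vector.mOfFn fun i => Part.some (g i v)) =
        Part.some (List.Vector.ofFn fun i => g i v) := by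
      rw [Part.eq_some_iff, mem_mOfFn]; simp
    rw [h]
    simp
  | prec _ _ ihf ihg => exact cmp_prec ihf ihg

theorem cmp_of_partrec' {n : ℕ} {f : List.Vector ℕ n →. ℕ} (hf : Nat.Partrec' f) : Cmp f := by
  induction hf with
  | prim h => exact cmp_of_primrec' h
  | comp g _ _ ihf ihg => exact cmp_comp g ihf ihg
  | rfind _ ih => exact cmp_rfind ih

end RProg

/-! ### One-counter affine automata -/

/-- A label: the counter value `α k + β` becomes `γ k + δ`. -/
structure AffL where
  α : ℕ
  β : ℕ
  γ : ℕ
  δ : ℕ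

/-- The relation of a label. -/
def AffL.rel (l : AffL) (x y : ℕ) : Prop := ∃ k, x = l.α * k + l.β ∧ y = l.γ * k + l.δ

/-- One step of the affine automaton. -/
def AStep {S : Type} (E : List (S × AffL × S)) (c d : S × ℕ) : Prop :=
  ∃ l, (c.1, l, d.1) ∈ E ∧ l.rel c.2 d.2

/-- A relation on `ℕ` realised by an affine automaton. -/
def AImpl (R : ℕ → ℕ → Prop) : Prop :=
  ∃ (S : Type) (_ : Fintype S) (E : List (S × AffL × S)) (i f : S),
    ∀ x y, R x y ↔ Relation.ReflTransGen (AStep E) (i, x) (f, y)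

namespace AImpl

open Relation

theorem basic (Ls : List AffL) : AImpl (fun x y => ∃ l ∈ Ls, l.rel x y) := by
  refine ⟨Bool, inferInstance, Ls.map fun l => (false, l, true), false, true, fun x y => ?_⟩
  constructor
  · rintro ⟨l, hl, h⟩
    exact ReflTransGen.single ⟨l, by simpa using hl, h⟩
  · intro h
    have key : ∀ c, ReflTransGen (AStep (Ls.map fun l => (false, l, true))) (false, x) c →
        c = (false, x) ∨ (c.1 = true ∧ ∃ l ∈ Ls, l.rel x c.2) := by
      intro c hc
      induction hc with
      | refl => exact Or.inl rfl
      | @tail c d _ h2 ih =>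
        obtain ⟨l, hl, hr⟩ := h2
        simp only [List.mem_map, Prod.mk.injEq] at hl
        obtain ⟨l', hl', h1, rfl, h3⟩ := hl
        rcases ih with rfl | ⟨h4, -⟩
        · exact Or.inr ⟨h3.symm, _, hl', hr⟩
        · rw [h4] at h1; cases h1
    rcases key _ h with h | h
    · cases h
    · exact h.2

/-- The identity label. -/
def idL : AffL := ⟨1, 0, 1, 0⟩

theorem idL_rel (x y : ℕ) : idL.rel x y ↔ y = x := by
  simp [AffL.rel, idL, eq_comm]

theorem lift_reach {S S' : Type} {E : List (S × AffL × S)} {E' : List (S' × AffL × S')}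
    (φ : S → S') (hE : ∀ a l b, (a, l, b) ∈ E → (φ a, l, φ b) ∈ E') {c d : S × ℕ}
    (h : ReflTransGen (AStep E) c d) :
    ReflTransGen (AStep E') (φ c.1, c.2) (φ d.1, d.2) := by
  induction h with
  | refl => exact .refl
  | tail _ h2 ih =>
    obtain ⟨l, hl, hr⟩ := h2
    exact ih.tail ⟨l, hE _ _ _ hl, hr⟩

theorem comp {R1 R2 : ℕ → ℕ → Prop} (h1 : AImpl R1) (h2 : AImpl R2) :
    AImpl (Relation.Comp R1 R2) := by
  obtain ⟨S1, _, E1, i1, f1, H1⟩ := h1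
  obtain ⟨S2, _, E2, i2, f2, H2⟩ := h2
  let E : List ((S1 ⊕ S2) × AffL × (S1 ⊕ S2)) :=
    (Sum.inl f1, idL, Sum.inr i2) :: (E1.map (fun e => (Sum.inl e.1, e.2.1, Sum.inl e.2.2)) ++
      E2.map (fun e => (Sum.inr e.1, e.2.1, Sum.inr e.2.2)))
  refine ⟨S1 ⊕ S2, inferInstance, E, Sum.inl i1, Sum.inr f2, fun x y => ?_⟩
  constructor
  · rintro ⟨m, hm1, hm2⟩
    have a1 := lift_reach (E' := E) Sum.inl (fun a l b h => by
      simp only [E, List.mem_cons, List.mem_append, List.mem_map]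
      exact Or.inr (Or.inl ⟨_, h, rfl⟩)) ((H1 _ _).1 hm1)
    have a2 := lift_reach (E' := E) Sum.inr (fun a l b h => by
      simp only [E, List.mem_cons, List.mem_append, List.mem_map]
      exact Or.inr (Or.inr ⟨_, h, rfl⟩)) ((H2 _ _).1 hm2)
    have st : AStep E (Sum.inl f1, m) (Sum.inr i2, m) :=
      ⟨idL, by simp [E], (idL_rel _ _).2 rfl⟩
    exact (a1.tail st).trans a2
  · intro h
    have key : ∀ c, ReflTransGen (AStep E) (Sum.inl i1, x) c →
        (∀ s, c.1 = Sum.inl s → ReflTransGen (AStep E1) (i1, x) (s, c.2)) ∧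
        (∀ s, c.1 = Sum.inr s → ∃ m, R1 x m ∧ ReflTransGen (AStep E2) (i2, m) (s, c.2)) := by
      intro c hc
      induction hc with
      | refl =>
        refine ⟨fun s hs => ?_, fun s hs => by cases hs⟩
        cases hs; exact .refl
      | @tail c d _ hstep ih =>
        obtain ⟨l, hl, hr⟩ := hstep
        simp only [E, List.mem_cons, List.mem_append, List.mem_map, Prod.mk.injEq] at hl
        rcases hl with ⟨e1, rfl, e2⟩ | ⟨e, he, e1, rfl, e2⟩ | ⟨e, he, e1, rfl, e2⟩
        · refine ⟨fun s hs => (by rw [e2] at hs; cases hs), fun s hs => ?_⟩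
          rw [e2] at hs; cases hs
          rw [idL_rel] at hr
          exact ⟨c.2, (H1 _ _).2 (ih.1 _ e1), by rw [hr]⟩
        · refine ⟨fun s hs => ?_, fun s hs => (by rw [← e2] at hs; cases hs)⟩
          rw [← e2] at hs; cases hs
          exact (ih.1 _ e1.symm).tail ⟨_, he, hr⟩
        · refine ⟨fun s hs => (by rw [← e2] at hs; cases hs), fun s hs => ?_⟩
          rw [← e2] at hs; cases hs
          obtain ⟨m, h1, h2⟩ := ih.2 _ e1.symm
          exact ⟨m, h1, h2.tail ⟨_, he, hr⟩⟩
    obtain ⟨m, h1, h2⟩ := (key _ h).2 f2 rfl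
    exact ⟨m, h1, (H2 _ _).2 h2⟩

theorem star {R : ℕ → ℕ → Prop} (h : AImpl R) : AImpl (ReflTransGen R) := by
  obtain ⟨S, _, E1, i1, f1, H1⟩ := h
  let E : List (Option S × AffL × Option S) :=
    (none, idL, some i1) :: (some f1, idL, none) ::
      E1.map (fun e => (some e.1, e.2.1, some e.2.2))
  refine ⟨Option S, inferInstance, E, none, none, fun x y => ?_⟩
  constructor
  · intro h
    induction h with
    | refl => exact .refl
    | @tail b c _ h2 ih =>
      have a1 := lift_reach (E' := E) some (fun a l b h => by
        simp only [E, List.mem_cons, List.mem_map]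
        exact Or.inr (Or.inr ⟨_, h, rfl⟩)) ((H1 _ _).1 h2)
      have s1 : AStep E (none, b) (some i1, b) := ⟨idL, by simp [E], (idL_rel _ _).2 rfl⟩
      have s2 : AStep E (some f1, c) (none, c) := ⟨idL, by simp [E], (idL_rel _ _).2 rfl⟩
      exact ((ih.tail s1).trans a1).tail s2
  · intro h
    have key : ∀ c, ReflTransGen (AStep E) (none, x) c →
        (c.1 = none → ReflTransGen R x c.2) ∧
        (∀ s, c.1 = some s → ∃ m, ReflTransGen R x m ∧
          ReflTransGen (AStep E1) (i1, m) (s, c.2)) := by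
      intro c hc
      induction hc with
      | refl => exact ⟨fun _ => .refl, fun s hs => by cases hs⟩
      | @tail c d _ hstep ih =>
        obtain ⟨l, hl, hr⟩ := hstep
        simp only [E, List.mem_cons, List.mem_map, Prod.mk.injEq] at hl
        rcases hl with ⟨e1, rfl, e2⟩ | ⟨e1, rfl, e2⟩ | ⟨e, he, e1, rfl, e2⟩
        · refine ⟨fun hs => (by rw [e2] at hs; cases hs), fun s hs => ?_⟩
          rw [e2] at hs; cases hs
          rw [idL_rel] at hr
          exact ⟨c.2, ih.1 e1, by rw [hr]⟩
        · refine ⟨fun hs => ?_, fun s hs => (by rw [e2] at hs; cases hs)⟩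
          rw [idL_rel] at hr
          obtain ⟨m, h1, h2⟩ := ih.2 _ e1
          rw [hr]
          exact h1.tail ((H1 _ _).2 h2)
        · refine ⟨fun hs => (by rw [← e2] at hs; cases hs), fun s hs => ?_⟩
          rw [← e2] at hs; cases hs
          obtain ⟨m, h1, h2⟩ := ih.2 _ e1.symm
          exact ⟨m, h1, h2.tail ⟨_, he, hr⟩⟩
    exact (key _ h).1 rfl

end AImpl

namespace RProg

open Function Relation

/-- A bound for the registers used by a program. -/
def bound : RProg → ℕ
  | inc i => i + 1
  | dec i => i + 1
  | tz i => i + 1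
  | seq P Q => max (bound P) (bound Q)
  | star P => bound P

/-- Goedel encoding of the first `M` registers. -/
noncomputable def enc (M : ℕ) (s : ℕ → ℕ) : ℕ :=
  ∏ i ∈ Finset.range M, (Nat.nth Nat.Prime i) ^ (s i)

theorem enc_update {M : ℕ} {i : ℕ} (hi : i < M) (s : ℕ → ℕ) (a : ℕ) :
    enc M (update s i (s i + a)) = (Nat.nth Nat.Prime i) ^ a * enc M s := by
  unfold enc
  rw [← Finset.mul_prod_erase _ _ (Finset.mem_range.2 hi),
    ← Finset.mul_prod_erase (Finset.range M) (fun j => (Nat.nth Nat.Prime j) ^ (s j))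
      (Finset.mem_range.2 hi)]
  rw [update_self, pow_add]
  have : ∏ x ∈ (Finset.range M).erase i, Nat.nth Nat.Prime x ^ update s i (s i + a) x =
      ∏ x ∈ (Finset.range M).erase i, Nat.nth Nat.Prime x ^ s x :=
    Finset.prod_congr rfl fun x hx => by rw [update_of_ne (Finset.ne_of_mem_erase hx)]
  rw [this]
  ring

theorem dvd_enc {M : ℕ} {i : ℕ} (hi : i < M) (s : ℕ → ℕ) :
    Nat.nth Nat.Prime i ∣ enc M s ↔ 0 < s i := by
  have hp : ∀ j, (Nat.nth Nat.Prime j).Prime := Nat.prime_nth_prime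
  unfold enc
  rw [(hp i).prime.dvd_finsetProd_iff]
  constructor
  · rintro ⟨j, _, hj⟩
    have h1 := (Nat.prime_dvd_prime_iff_eq (hp i) (hp j)).1 ((hp i).dvd_of_dvd_pow hj)
    have h2 := Nat.nth_injective Nat.infinite_setOfPred_prime h1
    subst h2
    rcases Nat.eq_zero_or_pos (s i) with h | h
    · rw [h, pow_zero] at hj
      exact absurd (Nat.dvd_one.1 hj) (hp i).one_lt.ne'
    · exact h
  · intro h
    exact ⟨i, Finset.mem_range.2 hi, dvd_pow_self _ h.ne'⟩

theorem exists_impl (P : RProg) (M : ℕ) (hM : bound P ≤ M) :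
    ∃ R : ℕ → ℕ → Prop, AImpl R ∧ ∀ s x', R (enc M s) x' ↔ ∃ s', x' = enc M s' ∧ sem P s s' := by
  induction P with
  | inc i =>
    simp only [bound] at hM
    refine ⟨_, AImpl.basic [⟨1, 0, Nat.nth Nat.Prime i, 0⟩], fun s x' => ?_⟩
    simp only [AffL.rel, sem, List.mem_singleton, exists_eq_left, exists_eq_right]
    rw [enc_update hM]
    simp
  | dec i =>
    simp only [bound] at hM
    refine ⟨_, AImpl.basic [⟨Nat.nth Nat.Prime i, 0, 1, 0⟩], fun s x' => ?_⟩
    simp only [AffL.rel, sem, List.mem_singleton, exists_eq_left]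
    have hp : 0 < Nat.nth Nat.Prime i := (Nat.prime_nth_prime i).pos
    have key : 0 < s i → enc M s =
        Nat.nth Nat.Prime i * enc M (update s i (s i - 1)) := by
      intro h
      have := enc_update hM (update s i (s i - 1)) 1
      rw [update_self, update_idem, Nat.sub_add_cancel h, update_eq_self, pow_one] at this
      exact this
    constructor
    · rintro ⟨k, h1, h2⟩
      have h3 : 0 < s i := (dvd_enc hM s).1 ⟨k, by simpa using h1⟩
      refine ⟨_, ?_, h3, rfl⟩
      rw [key h3] at h1
      have := Nat.eq_of_mul_eq_mul_left hp h1
      rw [h2, this]; ring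
    · rintro ⟨s', rfl, h3, rfl⟩
      exact ⟨_, by rw [key h3]; rfl, by ring⟩
  | tz i =>
    simp only [bound] at hM
    set p := Nat.nth Nat.Prime i with hpdef
    have hp : 0 < p := (Nat.prime_nth_prime i).pos
    refine ⟨_, AImpl.basic ((List.range (p - 1)).map fun j => ⟨p, j + 1, p, j + 1⟩),
      fun s x' => ?_⟩
    have key : s i = 0 ↔ ¬ p ∣ enc M s := by
      rw [dvd_enc hM]; omega
    simp only [AffL.rel, sem, List.mem_map, List.mem_range]
    constructor
    · rintro ⟨_, ⟨j, hj, rfl⟩, k, h1, h2⟩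
      refine ⟨s, by rw [h1, h2], key.2 fun hd => ?_, rfl⟩
      simp only at h1
      rw [h1, Nat.dvd_add_right (Dvd.intro _ rfl)] at hd
      have := Nat.le_of_dvd (by omega) hd
      omega
    · rintro ⟨s', rfl, h1, rfl⟩
      have h2 : enc M s' % p ≠ 0 := fun h => key.1 h1 (Nat.dvd_of_mod_eq_zero h)
      have h3 := Nat.mod_lt (enc M s') hp
      have h4 := Nat.div_add_mod (enc M s') p
      refine ⟨_, ⟨enc M s' % p - 1, by omega, rfl⟩, enc M s' / p, ?_, ?_⟩ <;> simp only <;> omega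
  | seq P Q ihP ihQ =>
    simp only [bound] at hM
    obtain ⟨R1, h1, H1⟩ := ihP (by omega)
    obtain ⟨R2, h2, H2⟩ := ihQ (by omega)
    refine ⟨_, h1.comp h2, fun s x' => ?_⟩
    simp only [sem]
    constructor
    · rintro ⟨m, a, b⟩
      obtain ⟨t, rfl, ht⟩ := (H1 _ _).1 a
      obtain ⟨t', rfl, ht'⟩ := (H2 _ _).1 b
      exact ⟨t', rfl, t, ht, ht'⟩
    · rintro ⟨t', rfl, t, ht, ht'⟩
      exact ⟨_, (H1 _ _).2 ⟨t, rfl, ht⟩, (H2 _ _).2 ⟨t', rfl, ht'⟩⟩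
  | star P ih =>
    simp only [bound] at hM
    obtain ⟨R, h1, H1⟩ := ih hM
    refine ⟨_, h1.star, fun s x' => ?_⟩
    simp only [sem]
    constructor
    · intro h
      induction h with
      | refl => exact ⟨s, rfl, .refl⟩
      | tail _ h2 ih =>
        obtain ⟨t, rfl, ht⟩ := ih
        obtain ⟨t', rfl, ht'⟩ := (H1 _ _).1 h2
        exact ⟨t', rfl, ht.tail ht'⟩
    · rintro ⟨s', rfl, h⟩
      induction h with
      | refl => exact .refl
      | tail _ h2 ih => exact ih.tail ((H1 _ _).2 ⟨_, rfl, h2⟩)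

end RProg

/-- Affine automata have an undecidable reachability problem. -/
theorem exists_affine_undecidable :
    ∃ (S : Type) (_ : Fintype S) (E : List (S × AffL × S)) (i f : S),
      ¬ ComputablePred fun c : Nat.Partrec.Code =>
        Relation.ReflTransGen (AStep E) (i, 2 ^ Encodable.encode c) (f, 0) := by
  let F : ℕ →. ℕ := fun n => (Nat.Partrec.Code.ofNatCode n).eval 0
  have hF : Partrec F := by
    have h1 : Computable Nat.Partrec.Code.ofNatCode :=
      (Computable.ofNat Nat.Partrec.Code)
    exact Nat.Partrec.Code.eval_part.comp h1 (Computable.const 0)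
  have hF' := RProg.cmp_of_partrec' (Nat.Partrec'.part_iff₁.2 hF)
  obtain ⟨P, hP⟩ := hF' (fun _ => 0) 1 (by simp)
  let Q : RProg := .seq P (RProg.clearN 0 1)
  obtain ⟨R, hR, HR⟩ := RProg.exists_impl Q (max 1 (RProg.bound Q)) (le_max_right _ _)
  obtain ⟨S, hS, E, i, f, H⟩ := hR.comp (AImpl.basic [⟨1, 1, 1, 0⟩])
  refine ⟨S, hS, E, i, f, fun hc => ComputablePred.halting_problem 0 (hc.of_eq fun c => ?_)⟩
  rw [← H]
  set M := max 1 (RProg.bound Q)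
  let s : ℕ → ℕ := Function.update (fun _ => 0) 0 (Encodable.encode c)
  have hs : RProg.enc M s = 2 ^ Encodable.encode c := by
    have := RProg.enc_update (M := M) (i := 0)
      (show 0 < M from le_max_left 1 (RProg.bound Q)) (fun _ => 0) (Encodable.encode c)
    rw [Nat.nth_prime_zero_eq_two] at this
    simpa [RProg.enc, s] using this
  have h0 : RProg.enc M (fun _ => 0) = 1 := by simp [RProg.enc]
  have hQ : ∀ s', RProg.sem Q s s' ↔ (c.eval 0).Dom ∧ s' = fun _ => 0 := by
    intro s'
    have hcl : RProg.Clean 1 s := by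
      intro r hr
      exact Function.update_of_ne (by omega) _ _
    simp only [Q, RProg.sem, hP s hcl, RProg.sem_clearN]
    have hv : F (List.Vector.ofFn (n := 1) fun _ => s 0).head = c.eval 0 := by
      have e : (List.Vector.ofFn (n := 1) fun _ => s 0).head = Encodable.encode c := by
        simp [List.Vector.ofFn, s]
      rw [e]
      exact congrArg (fun d => Nat.Partrec.Code.eval d 0) (Denumerable.ofNat_encode c)
    have hz : ∀ y, (fun r => if 0 ≤ r ∧ r ≤ 0 + 1 then 0 else Function.update s 1 y r) =
        fun _ => 0 := by
      intro y
      funext r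
      simp only [s, Function.update_apply]
      grind
    constructor
    · rintro ⟨m, ⟨y, hy, rfl⟩, rfl⟩
      rw [hz]
      refine ⟨?_, rfl⟩
      rw [← hv]
      exact Part.dom_iff_mem.2 ⟨y, hy⟩
    · rintro ⟨hd, rfl⟩
      rw [← hv] at hd
      obtain ⟨y, hy⟩ := Part.dom_iff_mem.1 hd
      exact ⟨_, ⟨y, hy, rfl⟩, (hz y).symm⟩
  rw [← hs]
  constructor
  · rintro ⟨m, h1, h2⟩
    obtain ⟨s', rfl, h3⟩ := (HR _ _).1 h1
    exact ((hQ _).1 h3).1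
  · intro hd
    refine ⟨1, (HR _ _).2 ⟨_, h0.symm, (hQ _).2 ⟨hd, rfl⟩⟩, ?_⟩
    simp [AffL.rel]

/-! ### Words and their formal inverses -/

section WInv

variable {B : Type*}

theorem wInv_one : wInv (1 : FreeMonoid (B × Bool)) = 1 := rfl

theorem wInv_of (b : B) (s : Bool) : wInv (FreeMonoid.of (b, s)) = FreeMonoid.of (b, !s) := rfl

theorem wInv_mul (u v : FreeMonoid (B × Bool)) : wInv (u * v) = wInv v * wInv u := by
  unfold wInv
  rw [FreeMonoid.toList_mul, List.map_append, List.reverse_append, FreeMonoid.ofList_append]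

theorem wInv_wInv (u : FreeMonoid (B × Bool)) : wInv (wInv u) = u := by
  unfold wInv
  simp [List.map_reverse, Function.comp_def]

end WInv

/-! ### Algebra in a monoid satisfying the Vagner relations -/

section Vagner

variable {B M : Type*} [Monoid M] (π : FreeMonoid (B × Bool) →* M)

/-- The monoid homomorphism satisfies the Vagner relations. -/
def IsVag : Prop :=
  (∀ w, π w * π (wInv w) * π w = π w) ∧
  (∀ u w, π w * π (wInv w) * (π u * π (wInv u)) = π u * π (wInv u) * (π w * π (wInv w)))

/-- The word `u` is right invertible, with right inverse its formal inverse. -/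
def RInv (u : FreeMonoid (B × Bool)) : Prop := π (u * wInv u) = 1

variable {π}

theorem RInv.mul {u v : FreeMonoid (B × Bool)} (hu : RInv π u) (hv : RInv π v) :
    RInv π (u * v) := by
  unfold RInv at *
  rw [wInv_mul]
  simp only [map_mul] at *
  calc _ = π u * (π v * π (wInv v)) * π (wInv u) := by simp only [mul_assoc]
    _ = 1 := by rw [hv, mul_one, hu]

theorem RInv.del (h : IsVag π) {x v y : FreeMonoid (B × Bool)}
    (hx : RInv π (x * (wInv v * v) * y)) : RInv π (x * y) := by
  unfold RInv at *
  simp only [wInv_mul, wInv_wInv, map_mul] at *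
  have v1 := h.1 (wInv v)
  have x1 := h.1 x
  have x2 := h.1 (wInv x)
  have xv := h.2 (wInv x) (wInv v)
  rw [wInv_wInv] at v1 x2
  rw [wInv_wInv, wInv_wInv] at xv
  generalize π x = X at *
  generalize π (wInv x) = X' at *
  generalize π y = Y at *
  generalize π (wInv y) = Y' at *
  have ee : π (wInv v) * π v * (π (wInv v) * π v) = π (wInv v) * π v := by
    rw [← mul_assoc, v1]
  generalize π (wInv v) * π v = e at *
  have c1 : X * e = X * e * X' * X := by
    calc X * e = X * X' * X * e := by rw [x1]
      _ = X * (X' * X * e) := by simp only [mul_assoc]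
      _ = X * e * X' * X := by rw [← xv]; simp only [mul_assoc]
  have c2 : e * X' = X' * (X * e * X') := by
    calc e * X' = e * (X' * X * X') := by rw [x2]
      _ = e * (X' * X) * X' := by simp only [mul_assoc]
      _ = X' * (X * e * X') := by rw [xv]; simp only [mul_assoc]
  have ii : X * e * X' * (X * e * X') = X * e * X' := by
    calc X * e * X' * (X * e * X') = (X * e * X' * X) * e * X' := by simp only [mul_assoc]
      _ = X * (e * e) * X' := by rw [← c1]; simp only [mul_assoc]
      _ = _ := by rw [ee]
  have hx' : X * e * X' * (X * (Y * (Y' * (e * X')))) = 1 := by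
    rw [← hx]
    calc X * e * X' * (X * (Y * (Y' * (e * X')))) = (X * e * X' * X) * (Y * (Y' * (e * X'))) := by
          simp only [mul_assoc]
      _ = _ := by rw [← c1]; simp only [mul_assoc]
  have i1 : X * e * X' = 1 := by
    calc X * e * X' = X * e * X' * (X * e * X' * (X * (Y * (Y' * (e * X'))))) := by
          rw [hx', mul_one]
      _ = (X * e * X' * (X * e * X')) * (X * (Y * (Y' * (e * X')))) := by simp only [mul_assoc]
      _ = 1 := by rw [ii, hx']
  rw [i1, mul_one] at c2
  rw [i1, one_mul] at c1
  rw [i1, one_mul, c2] at hx'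
  rw [← hx']
  simp only [mul_assoc]

theorem rInv_of_prod (h : IsVag π) (L : List (FreeMonoid (B × Bool))) (r : FreeMonoid (B × Bool))
    (hL : π ((L.map fun x => x * wInv x).prod * r) = 1) :
    (∀ x ∈ L, RInv π x) ∧ π r = 1 := by
  induction L with
  | nil => simpa using hL
  | cons x L ih =>
    rw [List.map_cons, List.prod_cons, mul_assoc, map_mul] at hL
    have e1 : π (x * wInv x) * π (x * wInv x) = π (x * wInv x) := by
      simp only [map_mul]
      rw [← mul_assoc, h.1]
    have e2 : π (x * wInv x) = 1 := by
      rw [← mul_one (π (x * wInv x)), ← hL, ← mul_assoc, e1]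
    rw [e2, one_mul] at hL
    obtain ⟨h1, h2⟩ := ih hL
    refine ⟨fun y hy => ?_, h2⟩
    rcases List.mem_cons.1 hy with rfl | hy
    · exact e2
    · exact h1 y hy

end Vagner

/-! ### The one-relator presentation attached to a finite automaton over a two-generator group -/

/-- Words in the two group generators `a` (`false`) and `t` (`true`). -/
abbrev GW := FreeMonoid (Bool × Bool)

namespace GW

/-- The generator `a`. -/
def a : GW := FreeMonoid.of (false, true)
/-- The inverse of `a`. -/
def a' : GW := FreeMonoid.of (false, false)
/-- The generator `t`. -/
def t : GW := FreeMonoid.of (true, true)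
/-- The inverse of `t`. -/
def t' : GW := FreeMonoid.of (true, false)
/-- The conjugate `t a t⁻¹`. -/
def b : GW := t * a * t'

theorem b_def : b = t * a * FreeMonoid.of (true, false) := rfl

/-- The group relator. -/
def r : GW := a * b * a' * wInv b

end GW

section Pres

variable {n : ℕ} {S : Type} (ι : Bool ⊕ S ≃ Fin n)

/-- Embedding of group words. -/
def emb : GW →* FreeMonoid (Fin n × Bool) :=
  FreeMonoid.map fun p => (ι (Sum.inl p.1), p.2)

/-- The letter attached to a state. -/
def tau (q : S) : FreeMonoid (Fin n × Bool) := FreeMonoid.of (ι (Sum.inr q), true)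

/-- The word attached to an edge. -/
def edgeW (q : S) (u : GW) (p : S) : FreeMonoid (Fin n × Bool) :=
  tau ι q * emb ι u * wInv (tau ι p)

/-- The words forced to be right invertible. -/
def relList (G : List (S × GW × S)) : List (FreeMonoid (Fin n × Bool)) :=
  [emb ι GW.a, emb ι GW.a', emb ι GW.t, emb ι GW.t'] ++ G.map fun e => edgeW ι e.1 e.2.1 e.2.2

/-- The relator. -/
def relator (G : List (S × GW × S)) : FreeMonoid (Fin n × Bool) :=
  ((relList ι G).map fun x => x * wInv x).prod * emb ι GW.r

theorem wInv_emb (u : GW) : wInv (emb ι u) = emb ι (wInv u) := by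
  unfold wInv emb
  simp only [FreeMonoid.toList_map, List.map_map]
  apply FreeMonoid.toList.injective
  simp [FreeMonoid.toList_map, List.map_reverse, Function.comp_def]

variable (G : List (S × GW × S))

/-- The quotient map onto the one-relator inverse monoid. -/
abbrev quo : FreeMonoid (Fin n × Bool) →* (oneRelatorInvCon (relator ι G)).Quotient :=
  (oneRelatorInvCon (relator ι G)).mk'

theorem quo_eq {u v : FreeMonoid (Fin n × Bool)} :
    quo ι G u = quo ι G v ↔ oneRelatorInvCon (relator ι G) u v :=
  Con.eq _

theorem quo_vag : IsVag (quo ι G) := by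
  constructor
  · intro w
    rw [← map_mul, ← map_mul, quo_eq]
    exact ConGen.Rel.of _ _ (Or.inl (Or.inl ⟨w, rfl, rfl⟩))
  · intro u w
    simp only [← map_mul]
    rw [quo_eq]
    exact ConGen.Rel.of _ _ (Or.inl (Or.inr ⟨u, w, rfl, rfl⟩))

theorem quo_rel : (∀ x ∈ relList ι G, RInv (quo ι G) x) ∧ quo ι G (emb ι GW.r) = 1 := by
  apply rInv_of_prod (quo_vag ι G)
  rw [← map_one (quo ι G), quo_eq]
  exact ConGen.Rel.of _ _ (Or.inr ⟨rfl, rfl⟩)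

theorem quo_unit (p : Bool × Bool) :
    quo ι G (emb ι (FreeMonoid.of p)) * quo ι G (emb ι (FreeMonoid.of (p.1, !p.2))) = 1 := by
  have h := (quo_rel ι G).1
  have key : ∀ u : GW, emb ι u ∈ relList ι G →
      quo ι G (emb ι u) * quo ι G (emb ι (wInv u)) = 1 := by
    intro u hu
    have := h _ hu
    rwa [RInv, wInv_emb, map_mul] at this
  obtain ⟨c, s⟩ := p
  cases c <;> cases s
  · exact key GW.a' (by simp [relList])
  · exact key GW.a (by simp [relList])
  · exact key GW.t' (by simp [relList])
  · exact key GW.t (by simp [relList])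

/-- Evaluation of group letters as units. -/
def valL (p : Bool × Bool) : ((oneRelatorInvCon (relator ι G)).Quotient)ˣ where
  val := quo ι G (emb ι (FreeMonoid.of p))
  inv := quo ι G (emb ι (FreeMonoid.of (p.1, !p.2)))
  val_inv := quo_unit ι G p
  inv_val := by
    have := quo_unit ι G (p.1, !p.2)
    simpa using this

/-- Evaluation of group words as units. -/
def val : GW →* ((oneRelatorInvCon (relator ι G)).Quotient)ˣ := FreeMonoid.lift (valL ι G)

theorem coe_val (u : GW) : (val ι G u : (oneRelatorInvCon (relator ι G)).Quotient) =
    quo ι G (emb ι u) := by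
  have : (Units.coeHom _).comp (val ι G) = (quo ι G).comp (emb ι) := by
    apply FreeMonoid.hom_eq
    intro p
    simp [val, valL]
  exact DFunLike.congr_fun this u

theorem val_wInv (u : GW) : val ι G (wInv u) = (val ι G u)⁻¹ := by
  induction u using FreeMonoid.inductionOn' with
  | one => rw [wInv_one, map_one, inv_one]
  | of_mul p u ih =>
    rw [wInv_mul, map_mul, map_mul, ih, mul_inv_rev]
    congr 1
    obtain ⟨c, s⟩ := p
    rw [wInv_of]
    ext
    simp [val, valL]

/-- Derivability of an edge. -/
def Der (q q' : S) (U : ((oneRelatorInvCon (relator ι G)).Quotient)ˣ) : Prop :=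
  quo ι G (tau ι q) * U * quo ι G (wInv (tau ι q')) *
    (quo ι G (tau ι q') * ↑(U⁻¹) * quo ι G (wInv (tau ι q))) = 1

theorem der_iff (q q' : S) (u : GW) :
    Der ι G q q' (val ι G u) ↔ RInv (quo ι G) (edgeW ι q u q') := by
  unfold Der RInv edgeW
  rw [← val_wInv, coe_val, coe_val]
  simp only [wInv_mul, wInv_wInv, wInv_emb, map_mul, mul_assoc]

theorem der_edge {q q' : S} {u : GW} (h : (q, u, q') ∈ G) : Der ι G q q' (val ι G u) := by
  rw [der_iff]
  apply (quo_rel ι G).1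
  simp only [relList, List.mem_append, List.mem_map]
  exact Or.inr ⟨_, h, rfl⟩

theorem der_mul {q q' q'' : S} {u v : GW} (h1 : Der ι G q q' (val ι G u))
    (h2 : Der ι G q' q'' (val ι G v)) : Der ι G q q'' (val ι G (u * v)) := by
  rw [der_iff] at *
  have h3 := h1.mul h2
  have h4 : RInv (quo ι G) (tau ι q * emb ι u * (wInv (tau ι q') * tau ι q') *
      (emb ι v * wInv (tau ι q''))) := by
    convert h3 using 1
    simp only [edgeW, mul_assoc]
  have h5 := h4.del (quo_vag ι G)
  convert h5 using 1
  simp only [edgeW, map_mul, mul_assoc]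

theorem val_comm : Commute (val ι G GW.a) (val ι G GW.b) := by
  have h : val ι G GW.r = 1 := by
    ext
    rw [coe_val, (quo_rel ι G).2]
    rfl
  have ha : val ι G GW.a' = (val ι G GW.a)⁻¹ := val_wInv ι G GW.a
  rw [GW.r, map_mul, map_mul, map_mul, val_wInv, ha] at h
  have h2 := mul_inv_eq_one.1 h
  rw [mul_inv_eq_iff_eq_mul] at h2
  exact h2

end Pres

/-! ### Partial bijections -/

section Model

/-- Partial bijections as a monoid. -/
instance pequivMonoid (X : Type) : Monoid (X ≃. X) where
  mul f g := f.trans g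
  one := PEquiv.refl X
  mul_assoc := PEquiv.trans_assoc
  one_mul := PEquiv.refl_trans
  mul_one := PEquiv.trans_refl

theorem pequiv_mul_apply {X : Type} (f g : X ≃. X) (x : X) : (f * g) x = (f x).bind g := rfl

theorem pequiv_vag1 {X : Type} (f : X ≃. X) : f * f.symm * f = f := by
  ext x y
  simp only [pequiv_mul_apply, Option.mem_def, Option.bind_eq_some_iff]
  constructor
  · rintro ⟨z, ⟨w, h1, h2⟩, h3⟩
    have : f z = some w := (PEquiv.eq_some_iff f).1 h2
    have := f.inj h1 this
    rwa [this]
  · intro h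
    exact ⟨x, ⟨y, h, (PEquiv.eq_some_iff f).2 h⟩, h⟩

theorem pequiv_vag2 {X : Type} (f g : X ≃. X) :
    f * f.symm * (g * g.symm) = g * g.symm * (f * f.symm) := by
  have key : ∀ (f g : X ≃. X) (x y : X), y ∈ (f * f.symm * (g * g.symm)) x ↔
      y = x ∧ (f x).isSome ∧ (g x).isSome := by
    intro f g x y
    have e : ∀ (f : X ≃. X) x y, (f * f.symm) x = some y ↔ y = x ∧ (f x).isSome := by
      intro f x y
      rw [pequiv_mul_apply, Option.bind_eq_some_iff]
      constructor
      · rintro ⟨w, h1, h2⟩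
        have : f y = some w := (PEquiv.eq_some_iff f).1 h2
        exact ⟨(f.inj h1 this).symm, by simp [h1]⟩
      · rintro ⟨rfl, h⟩
        obtain ⟨w, hw⟩ := Option.isSome_iff_exists.1 h
        exact ⟨w, hw, (PEquiv.eq_some_iff f).2 hw⟩
    rw [pequiv_mul_apply, Option.mem_def, Option.bind_eq_some_iff]
    constructor
    · rintro ⟨z, h1, h2⟩
      obtain ⟨rfl, h1⟩ := (e _ _ _).1 h1
      obtain ⟨rfl, h2⟩ := (e _ _ _).1 h2
      exact ⟨rfl, h1, h2⟩
    · rintro ⟨rfl, h1, h2⟩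
      exact ⟨y, (e _ _ _).2 ⟨rfl, h1⟩, (e _ _ _).2 ⟨rfl, h2⟩⟩
  ext x y
  exact (key f g x y).trans (((key g f x y).trans (by tauto)).symm)

variable {n : ℕ}

/-- The homomorphism given by partial bijections attached to letters. -/
def pev {X : Type} (f : Fin n → (X ≃. X)) : FreeMonoid (Fin n × Bool) →* (X ≃. X) :=
  FreeMonoid.lift fun p => if p.2 then f p.1 else (f p.1).symm

theorem pev_wInv {X : Type} (f : Fin n → (X ≃. X)) (w : FreeMonoid (Fin n × Bool)) :
    pev f (wInv w) = (pev f w).symm := by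
  induction w using FreeMonoid.inductionOn' with
  | one => rfl
  | of_mul p u ih =>
    rw [wInv_mul, map_mul, map_mul, ih]
    have h : pev f (wInv (FreeMonoid.of p)) = (pev f (FreeMonoid.of p)).symm := by
      obtain ⟨c, s⟩ := p
      rw [wInv_of]
      cases s <;> simp [pev]
    rw [h]
    rfl

theorem con_le_pev {X : Type} (f : Fin n → (X ≃. X)) (w : FreeMonoid (Fin n × Bool))
    (hw : pev f w = 1) {u v : FreeMonoid (Fin n × Bool)} (h : oneRelatorInvCon w u v) :
    pev f u = pev f v := by
  have : oneRelatorInvCon w ≤ Con.ker (pev f) := by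
    refine Con.conGen_le.2 ?_
    rintro x y ((⟨w, rfl, rfl⟩ | ⟨u, w, rfl, rfl⟩) | ⟨rfl, rfl⟩)
    all_goals rw [Con.ker_apply]
    · simp only [map_mul, pev_wInv, pequiv_vag1]
    · simp only [map_mul, pev_wInv]
      exact pequiv_vag2 _ _
    · rw [hw, map_one]
  exact this h

theorem pequiv_total {X : Type} {f : X ≃. X} (h : ∀ x, (f x).isSome) : f * f.symm = 1 := by
  ext x y
  obtain ⟨z, hz⟩ := Option.isSome_iff_exists.1 (h x)
  rw [pequiv_mul_apply, hz]
  have h1 : f.symm z = some x := (PEquiv.eq_some_iff f).2 hz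
  change f.symm z = some y ↔ some x = some y
  rw [h1]

theorem pequiv_total' {X : Type} {f : X ≃. X} (h : f * f.symm = 1) (x : X) : (f x).isSome := by
  have h1 : (f * f.symm) x = some x := by rw [h]; rfl
  rw [pequiv_mul_apply] at h1
  cases hx : f x with
  | none => rw [hx] at h1; cases h1
  | some y => rfl

/-- The action of group words. -/
def gact {W : Type} (p : Bool → Equiv.Perm W) (u : GW) (y : W) : W :=
  (FreeMonoid.toList u).foldl (fun y l => if l.2 then p l.1 y else (p l.1).symm y) y

theorem gact_one {W : Type} (p : Bool → Equiv.Perm W) (y : W) : gact p 1 y = y := rfl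

theorem gact_mul {W : Type} (p : Bool → Equiv.Perm W) (u v : GW) (y : W) :
    gact p (u * v) y = gact p v (gact p u y) := by
  simp [gact, FreeMonoid.toList_mul, List.foldl_append]

theorem gact_of {W : Type} (p : Bool → Equiv.Perm W) (c s : Bool) (y : W) :
    gact p (FreeMonoid.of (c, s)) y = if s then p c y else (p c).symm y := rfl

variable {S : Type} (ι : Bool ⊕ S ≃ Fin n) (G : List (S × GW × S))

theorem model {W : Type} [Countable W] (p : Bool → Equiv.Perm W)
    (hr : ∀ y, gact p GW.r y = y) (Y : S → Set W) (hne : ∀ q, (Y q).Nonempty)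
    (hG : ∀ q u q', (q, u, q') ∈ G → ∀ y ∈ Y q, gact p u y ∈ Y q')
    {q q' : S} {u : GW} {y : W} (hy : y ∈ Y q) (hy' : gact p u y ∉ Y q') :
    ¬ oneRelatorInvCon (relator ι G) (edgeW ι q u q' * wInv (edgeW ι q u q')) 1 := by
  classical
  have eqv : ∀ q, Nonempty ((W × ℕ) ≃ (Y q ×ˢ (Set.univ : Set ℕ) : Set (W × ℕ))) := by
    intro q
    have : Nonempty W := ⟨y⟩
    have hi : Infinite (Y q ×ˢ (Set.univ : Set ℕ) : Set (W × ℕ)) := by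
      rw [Set.infinite_coe_iff]
      exact Set.infinite_univ.prod_right (hne q)
    exact nonempty_equiv_of_countable
  have e := fun q => Classical.choice (eqv q)
  let tq : S → (W × ℕ) ≃. (W × ℕ) := fun q =>
    { toFun := fun x => some (e q x).1
      invFun := fun x => if h : x.1 ∈ Y q then some ((e q).symm ⟨x, h, trivial⟩) else none
      inv := by
        intro x z
        by_cases h : z.1 ∈ Y q
        · simp only [h, dite_true, Option.mem_def, Option.some.injEq]
          rw [Equiv.symm_apply_eq, Subtype.ext_iff]
          exact eq_comm
        · simp only [h, dite_false, Option.mem_def, Option.some.injEq]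
          constructor
          · intro h'; cases h'
          · rintro rfl
            exact absurd (e q x).2.1 h }
  let f : Fin n → ((W × ℕ) ≃. (W × ℕ)) := fun k =>
    match ι.symm k with
    | Sum.inl c => ((p c).prodCongr (Equiv.refl ℕ)).toPEquiv
    | Sum.inr q => tq q
  have femb : ∀ (u : GW) (x : W × ℕ), pev f (emb ι u) x = some (gact p u x.1, x.2) := by
    intro u
    induction u using FreeMonoid.inductionOn' with
    | one => intro x; rfl
    | of_mul l u ih =>
      intro x
      rw [map_mul, map_mul, pequiv_mul_apply, gact_mul]
      have : pev f (emb ι (FreeMonoid.of l)) x = some (gact p (FreeMonoid.of l) x.1, x.2) := by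
        obtain ⟨c, s⟩ := l
        rw [gact_of]
        cases s <;> simp [pev, emb, f, Equiv.toPEquiv, PEquiv.symm] <;> rfl
      rw [this]
      exact ih _
  have ftau : ∀ q, pev f (tau ι q) = tq q := by
    intro q
    simp [pev, tau, f]
  have fedge : ∀ q u q' x, pev f (edgeW ι q u q') x =
      (tq q').symm (gact p u (e q x).1.1, (e q x).1.2) := by
    intro q u q' x
    rw [edgeW, map_mul, map_mul, pev_wInv, ftau, ftau, pequiv_mul_apply, pequiv_mul_apply]
    have : tq q x = some (e q x).1 := rfl
    rw [this, Option.bind_some, femb]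
    rfl
  have fsymm : ∀ q x, ((tq q).symm x).isSome ↔ x.1 ∈ Y q := by
    intro q x
    change ((if h : x.1 ∈ Y q then some ((e q).symm ⟨x, h, trivial⟩) else none) :
      Option (W × ℕ)).isSome ↔ _
    by_cases h : x.1 ∈ Y q <;> simp [h]
  have hlist : ∀ x ∈ relList ι G, pev f (x * wInv x) = 1 := by
    intro x hx
    rw [map_mul, pev_wInv]
    apply pequiv_total
    intro z
    simp only [relList, List.mem_append, List.mem_map] at hx
    rcases hx with hx | ⟨⟨q, u, q'⟩, he, rfl⟩
    · have : ∃ u, x = emb ι u := by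
        simp only [List.mem_cons, List.not_mem_nil, or_false] at hx
        rcases hx with rfl | rfl | rfl | rfl <;> exact ⟨_, rfl⟩
      obtain ⟨u, rfl⟩ := this
      rw [femb]; rfl
    · rw [fedge, fsymm]
      exact hG _ _ _ he _ (e q z).2.1
  have hw : pev f (relator ι G) = 1 := by
    have h1 : pev f (((relList ι G).map fun x => x * wInv x).prod) = 1 := by
      rw [map_list_prod]
      apply List.prod_eq_one
      intro z hz
      simp only [List.mem_map] at hz
      obtain ⟨_, ⟨x, hx, rfl⟩, rfl⟩ := hz
      exact hlist x hx
    rw [relator, map_mul, h1, one_mul]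
    ext x z
    rw [femb, hr]
    rfl
  intro hcon
  have h1 := con_le_pev f _ hw hcon
  rw [map_one, map_mul, pev_wInv] at h1
  have h2 := pequiv_total' h1 ((e q).symm ⟨(y, 0), hy, trivial⟩)
  rw [fedge, fsymm] at h2
  simp only [Equiv.apply_symm_apply] at h2
  exact hy' h2

end Model

/-! ### The automaton of an affine transition system -/

section Automaton

variable {S : Type} (E : List (S × AffL × S)) (i f : S)

/-- States: main states, one loop state for every edge, one final state. -/
abbrev AutS := S ⊕ Fin E.length ⊕ Unit

/-- The three edges attached to a transition. -/
def autEdges (j : Fin E.length) : List (AutS E × GW × AutS E) :=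
  [(Sum.inl (E.get j).1, GW.a' ^ (E.get j).2.1.β, Sum.inr (Sum.inl j)),
   (Sum.inr (Sum.inl j), GW.a' ^ (E.get j).2.1.α * GW.b ^ (E.get j).2.1.γ, Sum.inr (Sum.inl j)),
   (Sum.inr (Sum.inl j), GW.b ^ (E.get j).2.1.δ * GW.t, Sum.inl (E.get j).2.2)]

/-- The final state. -/
def autZ : AutS E := Sum.inr (Sum.inr ())

/-- All edges. -/
def autG : List (AutS E × GW × AutS E) :=
  [(Sum.inl f, 1, autZ E), (autZ E, GW.t', autZ E)] ++ (List.finRange E.length).flatMap (autEdges E)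

theorem mem_autG_edges (j : Fin E.length) {e : AutS E × GW × AutS E} (h : e ∈ autEdges E j) :
    e ∈ autG E f := by
  unfold autG
  rw [List.mem_append, List.mem_flatMap]
  exact Or.inr ⟨j, List.mem_finRange j, h⟩

section Complete

variable {n : ℕ} (ι : Bool ⊕ AutS E ≃ Fin n)

theorem val_a' : val ι (autG E f) GW.a' = (val ι (autG E f) GW.a)⁻¹ :=
  val_wInv ι (autG E f) GW.a

theorem val_t' : val ι (autG E f) GW.t' = (val ι (autG E f) GW.t)⁻¹ :=
  val_wInv ι (autG E f) GW.t

theorem der_step {q q' : S} {x y : ℕ} (h : AStep E (q, x) (q', y)) :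
    Der ι (autG E f) (Sum.inl q) (Sum.inl q') (val ι (autG E f) (GW.a' ^ x * GW.t * GW.a ^ y)) := by
  obtain ⟨l, hl, k, hx, hy⟩ := h
  obtain ⟨j, hj⟩ := List.get_of_mem hl
  simp only at hl hx hy hj
  have e1 := der_edge ι (autG E f) (mem_autG_edges E f j (e := _) (List.mem_cons_self ..))
  have e2 := der_edge ι (autG E f) (mem_autG_edges E f j (e := _)
    (List.mem_cons_of_mem _ (List.mem_cons_self ..)))
  have e3 := der_edge ι (autG E f) (mem_autG_edges E f j (e := _)
    (List.mem_cons_of_mem _ (List.mem_cons_of_mem _ (List.mem_cons_self ..))))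
  rw [hj] at e1 e2 e3
  simp only at e1 e2 e3
  have e4 : ∀ k : ℕ, Der ι (autG E f) (Sum.inl q) (Sum.inr (Sum.inl j))
      (val ι (autG E f) (GW.a' ^ l.β * (GW.a' ^ l.α * GW.b ^ l.γ) ^ k)) := by
    intro k
    induction k with
    | zero => simpa using e1
    | succ k ih =>
      have := der_mul ι (autG E f) ih e2
      rwa [mul_assoc, ← pow_succ] at this
  have e5 := der_mul ι (autG E f) (e4 k) e3
  convert e5 using 1
  simp only [map_mul, map_pow, val_a']
  have hc := val_comm ι (autG E f)
  have hb : val ι (autG E f) GW.b = val ι (autG E f) GW.t * val ι (autG E f) GW.a *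
      (val ι (autG E f) GW.t)⁻¹ := by
    rw [GW.b, map_mul, map_mul, val_t']
  have ht : val ι (autG E f) GW.t * (val ι (autG E f) GW.a) ^ y =
      (val ι (autG E f) GW.b) ^ y * val ι (autG E f) GW.t := by
    rw [hb, conj_pow]
    simp
  generalize val ι (autG E f) GW.a = A at *
  generalize val ι (autG E f) GW.b = B at *
  generalize val ι (autG E f) GW.t = T at *
  rw [mul_assoc, ht, (hc.inv_left.pow_pow l.α l.γ).mul_pow k, ← pow_mul, ← pow_mul, hx, hy,
    pow_add, pow_add, pow_mul, pow_mul, ← pow_mul, ← pow_mul]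
  have hcomm : A⁻¹ ^ (l.α * k) * A⁻¹ ^ l.β = A⁻¹ ^ l.β * A⁻¹ ^ (l.α * k) := by
    rw [← pow_add, ← pow_add, add_comm]
  rw [hcomm]
  simp only [mul_assoc]

theorem der_reach {q : S} {x : ℕ} (h : Relation.ReflTransGen (AStep E) (q, x) (f, 0)) :
    ∃ N : ℕ, Der ι (autG E f) (Sum.inl q) (autZ E)
      (val ι (autG E f) (GW.a' ^ x * GW.t ^ N)) := by
  have key : ∀ c : S × ℕ, Relation.ReflTransGen (AStep E) c (f, 0) →
      ∃ N : ℕ, Der ι (autG E f) (Sum.inl c.1) (autZ E)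
        (val ι (autG E f) (GW.a' ^ c.2 * GW.t ^ N)) := by
    intro c hc
    induction hc using Relation.ReflTransGen.head_induction_on with
    | refl =>
      refine ⟨0, ?_⟩
      have := der_edge ι (autG E f) (q := Sum.inl f) (u := 1) (q' := autZ E) (by simp [autG])
      simpa using this
    | @head c d h1 _ ih =>
      obtain ⟨N, hN⟩ := ih
      refine ⟨N + 1, ?_⟩
      have := der_mul ι (autG E f) (der_step E f ι h1) hN
      rw [map_mul] at this
      have e : val ι (autG E f) (GW.a' ^ c.2 * GW.t ^ (N + 1)) =
          val ι (autG E f) (GW.a' ^ c.2 * GW.t * GW.a ^ d.2) *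
            val ι (autG E f) (GW.a' ^ d.2 * GW.t ^ N) := by
        simp only [map_mul, map_pow, val_a', pow_succ']
        generalize val ι (autG E f) GW.a = A
        generalize val ι (autG E f) GW.t = T
        rw [inv_pow A d.2]
        simp only [mul_assoc, mul_inv_cancel_left]
      rw [e]
      exact this
  exact key (q, x) h

theorem der_final {q : S} {x : ℕ} (h : Relation.ReflTransGen (AStep E) (q, x) (f, 0)) :
    Der ι (autG E f) (Sum.inl q) (autZ E) (val ι (autG E f) (GW.a' ^ x)) := by
  obtain ⟨N, hN⟩ := der_reach E f ι h
  induction N with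
  | zero => simpa using hN
  | succ N ih =>
    apply ih
    have := der_mul ι (autG E f) hN
      (der_edge ι (autG E f) (q := autZ E) (u := GW.t') (q' := autZ E) (by simp [autG]))
    have e : val ι (autG E f) (GW.a' ^ x * GW.t ^ N) =
        val ι (autG E f) (GW.a' ^ x * GW.t ^ (N + 1) * GW.t') := by
      simp only [map_mul, map_pow, val_a', val_t', pow_succ, mul_assoc, mul_inv_cancel, mul_one]
    rw [e]
    exact this

theorem con_of_reach {q : S} {x : ℕ} (h : Relation.ReflTransGen (AStep E) (q, x) (f, 0)) :
    oneRelatorInvCon (relator ι (autG E f))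
      (edgeW ι (Sum.inl q) (GW.a' ^ x) (autZ E) * wInv (edgeW ι (Sum.inl q) (GW.a' ^ x) (autZ E)))
      1 := by
  have := (der_iff ι (autG E f) _ _ _).1 (der_final E f ι h)
  rw [RInv, ← map_one (quo ι (autG E f)), quo_eq] at this
  exact this

end Complete

/-! ### Soundness: the lamplighter action -/

/-- Lamp configurations with a position. -/
abbrev Lamp := (ℤ →₀ ℤ) × ℤ

/-- The two generators acting on lamp configurations. -/
noncomputable def lampP : Bool → Equiv.Perm Lamp
  | false =>
    { toFun := fun w => (w.1 + Finsupp.single w.2 1, w.2)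
      invFun := fun w => (w.1 - Finsupp.single w.2 1, w.2)
      left_inv := fun w => by simp
      right_inv := fun w => by simp }
  | true =>
    { toFun := fun w => (w.1, w.2 + 1)
      invFun := fun w => (w.1, w.2 - 1)
      left_inv := fun w => by simp
      right_inv := fun w => by simp }

theorem lamp_a (g : ℤ →₀ ℤ) (m : ℤ) : gact lampP GW.a (g, m) = (g + Finsupp.single m 1, m) := rfl

theorem lamp_a' (g : ℤ →₀ ℤ) (m : ℤ) : gact lampP GW.a' (g, m) = (g - Finsupp.single m 1, m) := rfl

theorem lamp_t (g : ℤ →₀ ℤ) (m : ℤ) : gact lampP GW.t (g, m) = (g, m + 1) := rfl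

theorem lamp_t' (g : ℤ →₀ ℤ) (m : ℤ) : gact lampP GW.t' (g, m) = (g, m - 1) := rfl

theorem lamp_b (g : ℤ →₀ ℤ) (m : ℤ) :
    gact lampP GW.b (g, m) = (g + Finsupp.single (m + 1) 1, m) := by
  rw [GW.b, gact_mul, gact_mul, lamp_t, lamp_a, lamp_t', add_sub_cancel_right]

theorem lamp_b' (g : ℤ →₀ ℤ) (m : ℤ) :
    gact lampP (wInv GW.b) (g, m) = (g - Finsupp.single (m + 1) 1, m) := by
  have : wInv GW.b = GW.t * (GW.a' * GW.t') := rfl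
  rw [this, gact_mul, gact_mul, lamp_t, lamp_a', lamp_t', add_sub_cancel_right]

theorem lamp_r (w : Lamp) : gact lampP GW.r w = w := by
  obtain ⟨g, m⟩ := w
  rw [GW.r, gact_mul, gact_mul, gact_mul, lamp_a, lamp_b, lamp_a', lamp_b']
  congr 1
  abel

theorem lamp_a'_pow (g : ℤ →₀ ℤ) (m : ℤ) (x : ℕ) :
    gact lampP (GW.a' ^ x) (g, m) = (g - Finsupp.single m (x : ℤ), m) := by
  induction x with
  | zero => simp [gact_one]
  | succ x ih =>
    rw [pow_succ, gact_mul, ih, lamp_a', Nat.cast_succ, Finsupp.single_add, sub_sub]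

theorem lamp_b_pow (g : ℤ →₀ ℤ) (m : ℤ) (x : ℕ) :
    gact lampP (GW.b ^ x) (g, m) = (g + Finsupp.single (m + 1) (x : ℤ), m) := by
  induction x with
  | zero => simp [gact_one]
  | succ x ih =>
    rw [pow_succ, gact_mul, ih, lamp_b, Nat.cast_succ, Finsupp.single_add, add_assoc]

/-- Dirty configurations: a lamp strictly to the left of the position is on. -/
def Dirty (w : Lamp) : Prop := ∃ j < w.2, w.1 j ≠ 0

theorem dirty_step {g h : ℤ →₀ ℤ} {m m' : ℤ} (hd : Dirty (g, m)) (hm : m ≤ m')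
    (hh : ∀ j < m, h j = g j) : Dirty (h, m') := by
  obtain ⟨j, hj, hg⟩ := hd
  exact ⟨j, lt_of_lt_of_le hj hm, by rw [hh j hj]; exact hg⟩

/-- The invariant sets. -/
def lampY (x0 : ℕ) : AutS E → Set Lamp
  | Sum.inl q => {w | (∃ y : ℕ, Relation.ReflTransGen (AStep E) (i, x0) (q, y) ∧
      w.1 = Finsupp.single w.2 (y : ℤ)) ∨ Dirty w}
  | Sum.inr (Sum.inl j) => {w | (∃ y k : ℕ,
      Relation.ReflTransGen (AStep E) (i, x0) ((E.get j).1, y) ∧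
      w.1 = Finsupp.single w.2 ((y : ℤ) - (E.get j).2.1.β - (E.get j).2.1.α * k) +
        Finsupp.single (w.2 + 1) (((E.get j).2.1.γ : ℤ) * k)) ∨ Dirty w}
  | Sum.inr (Sum.inr _) => {w | w.1 ≠ 0}

theorem lampY_ne (x0 : ℕ) (q : AutS E) : (lampY E i x0 q).Nonempty := by
  have hd : Dirty (Finsupp.single 0 1, 1) := ⟨0, by simp, by simp⟩
  refine ⟨(Finsupp.single 0 1, 1), ?_⟩
  rcases q with q | j | _
  · exact Or.inr hd
  · exact Or.inr hd
  · simp [lampY]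

theorem lampY_closed (x0 : ℕ) (hno : ¬ Relation.ReflTransGen (AStep E) (i, x0) (f, 0))
    (q : AutS E) (u : GW) (q' : AutS E) (he : (q, u, q') ∈ autG E f) (w : Lamp)
    (hw : w ∈ lampY E i x0 q) : gact lampP u w ∈ lampY E i x0 q' := by
  obtain ⟨g, m⟩ := w
  simp only [autG, List.mem_append, List.mem_cons, List.not_mem_nil, or_false, List.mem_flatMap,
    autEdges, Prod.mk.injEq] at he
  rcases he with (⟨rfl, rfl, rfl⟩ | ⟨rfl, rfl, rfl⟩) | ⟨j, _, he⟩
  · rw [gact_one]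
    change g ≠ 0
    rcases hw with ⟨y, hy, hg⟩ | ⟨j, _, hj⟩
    · simp only at hg
      rintro rfl
      have : (y : ℤ) = 0 := by
        have := hg.symm
        rwa [Finsupp.single_eq_zero] at this
      obtain rfl : y = 0 := by exact_mod_cast this
      exact hno hy
    · rintro rfl
      exact hj rfl
  · rw [lamp_t']
    exact hw
  · have hmem : E.get j ∈ E := List.get_mem E j
    rcases he with ⟨rfl, rfl, rfl⟩ | ⟨rfl, rfl, rfl⟩ | ⟨rfl, rfl, rfl⟩
    · rw [lamp_a'_pow]
      rcases hw with ⟨y, hy, hg⟩ | hd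
      · refine Or.inl ⟨y, 0, hy, ?_⟩
        simp only at hg ⊢
        rw [hg]
        simp [Finsupp.single_sub]
      · refine Or.inr (dirty_step hd le_rfl fun j hj => ?_)
        simp [Finsupp.single_apply, hj.ne']
    · rw [gact_mul, lamp_a'_pow, lamp_b_pow]
      rcases hw with ⟨y, k, hy, hg⟩ | hd
      · refine Or.inl ⟨y, k + 1, hy, ?_⟩
        simp only at hg ⊢
        rw [hg]
        push_cast
        simp only [mul_add, mul_one, Finsupp.single_sub, Finsupp.single_add]
        abel
      · refine Or.inr (dirty_step hd le_rfl fun j hj => ?_)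
        have h1 : m ≠ j := hj.ne'
        have h2 : m + 1 ≠ j := by omega
        simp [Finsupp.single_apply, h1, h2]
    · rw [gact_mul, lamp_b_pow, lamp_t]
      rcases hw with ⟨y, k, hy, hg⟩ | hd
      · simp only at hg
        by_cases h0 : (y : ℤ) - (E.get j).2.1.β - (E.get j).2.1.α * k = 0
        · refine Or.inl ⟨(E.get j).2.1.γ * k + (E.get j).2.1.δ, hy.tail ?_, ?_⟩
          · refine ⟨(E.get j).2.1, hmem, k, ?_, rfl⟩
            zify
            linarith
          · simp only
            rw [hg, h0]
            push_cast
            simp [Finsupp.single_add]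
        · refine Or.inr ⟨m, by simp, ?_⟩
          simp only
          rw [hg]
          simpa [Finsupp.single_apply] using h0
      · refine Or.inr (dirty_step hd (by omega) fun j hj => ?_)
        have h2 : m + 1 ≠ j := by omega
        simp [Finsupp.single_apply, h2]

theorem con_iff_reach {n : ℕ} (ι : Bool ⊕ AutS E ≃ Fin n) (x : ℕ) :
    oneRelatorInvCon (relator ι (autG E f))
      (edgeW ι (Sum.inl i) (GW.a' ^ x) (autZ E) * wInv (edgeW ι (Sum.inl i) (GW.a' ^ x) (autZ E)))
      1 ↔ Relation.ReflTransGen (AStep E) (i, x) (f, 0) := by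
  constructor
  · intro h
    by_contra hno
    refine model ι (autG E f) lampP lamp_r (lampY E i x) (lampY_ne E i x)
      (lampY_closed E i f x hno) (y := (Finsupp.single 0 (x : ℤ), 0)) ?_ ?_ h
    · exact Or.inl ⟨x, Relation.ReflTransGen.refl, rfl⟩
    · rw [lamp_a'_pow, sub_self]
      simp [lampY, autZ]
  · exact con_of_reach E f ι

end Automaton

/-! ### Computability of the reduction -/

theorem primrec_replicate {α β : Type*} [Primcodable α] [Primcodable β] (b : β) {g : α → ℕ}
    (hg : Primrec g) : Primrec fun x => List.replicate (g x) b := by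
  have h : Primrec fun m : ℕ => List.replicate m b := by
    have : Primrec fun m : ℕ => (List.range m).map fun _ => b :=
      Primrec.list_map Primrec.list_range (Primrec.const b).to₂
    exact this.of_eq fun m => by simp
  exact h.comp hg

theorem primrec_word {n : ℕ} {S : Type} (ι : Bool ⊕ S ≃ Fin n) (q q' : S) {α : Type*}
    [Primcodable α] {g : α → ℕ} (hg : Primrec g) :
    Primrec fun x => edgeW ι q (GW.a' ^ g x) q' * wInv (edgeW ι q (GW.a' ^ g x) q') := by
  have h1 : Primrec fun x =>
      ([(ι (Sum.inr q), true)] ++ List.replicate (g x) (ι (Sum.inl false), false) ++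
        [(ι (Sum.inr q'), false), (ι (Sum.inr q'), true)] ++
        List.replicate (g x) (ι (Sum.inl false), true) ++ [(ι (Sum.inr q), false)] :
        List (Fin n × Bool)) := by
    refine Primrec.list_append.comp (Primrec.list_append.comp (Primrec.list_append.comp
      (Primrec.list_append.comp (Primrec.const _) (primrec_replicate _ hg)) (Primrec.const _))
      (primrec_replicate _ hg)) (Primrec.const _)
  have h2 : Primrec (FreeMonoid.toList (α := Fin n × Bool)).symm := Primrec.of_equiv_symm
  refine (h2.comp h1).of_eq fun x => ?_
  have hp : ∀ m : ℕ, FreeMonoid.toList (emb ι (GW.a' ^ m)) =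
      List.replicate m (ι (Sum.inl false), false) := by
    intro m
    induction m with
    | zero => simp
    | succ m ih =>
      rw [pow_succ', map_mul, FreeMonoid.toList_mul, ih, List.replicate_succ]
      rfl
  rw [Equiv.symm_apply_eq]
  simp only [edgeW, wInv_mul, wInv_wInv, FreeMonoid.toList_mul]
  have hi : FreeMonoid.toList (wInv (emb ι (GW.a' ^ g x))) =
      List.replicate (g x) (ι (Sum.inl false), true) := by
    simp only [wInv, hp]
    simp
  rw [hp, hi]
  simp [tau, wInv_of]

/-- There is a one-relator inverse monoid `Inv⟨A | w = 1⟩` with undecidable word problem. -/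
theorem exists_oneRelator_invMonoid_undecidable_wordProblem :
    ∃ (n : ℕ) (w : FreeMonoid (Fin n × Bool)),
      ¬ ComputablePred
        (fun p : FreeMonoid (Fin n × Bool) × FreeMonoid (Fin n × Bool) =>
          oneRelatorInvCon w p.1 p.2) := by
  obtain ⟨S, hS, E, i, f, hE⟩ := exists_affine_undecidable
  let ι : Bool ⊕ AutS E ≃ Fin (Fintype.card (Bool ⊕ AutS E)) := Fintype.equivFin _
  refine ⟨_, relator ι (autG E f), fun hc => hE ?_⟩
  have hpow : Primrec fun c : Nat.Partrec.Code => 2 ^ Encodable.encode c := by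
    have h : Primrec fun m : ℕ => 2 ^ m := by
      have h2 : Primrec₂ fun (_ : ℕ) (r : ℕ) => r * 2 :=
        Primrec.nat_mul.comp Primrec.snd (Primrec.const 2)
      have := Primrec.nat_rec₁ (f := fun (_ : ℕ) (r : ℕ) => r * 2) 1 h2
      refine this.of_eq fun m => ?_
      induction m with
      | zero => rfl
      | succ m ih => rw [pow_succ, ← ih]
    exact h.comp Primrec.encode
  have hw := primrec_word ι (Sum.inl i) (autZ E) hpow
  have hcomp := (Primrec.pair hw (Primrec.const (1 : FreeMonoid (Fin (Fintype.card (Bool ⊕ AutS E)) × Bool)))).to_comp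
  refine ComputablePred.computable_of_manyOneReducible ⟨_, hcomp, fun c => ?_⟩ hc
  exact (con_iff_reach E i f ι (2 ^ Encodable.encode c)).symm
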